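/- Let G be a threshold graph on {1,…,m} with weight vector w satisfying w_1 ≥ w_2 ≥ ⋯ ≥ w_m, and assume G has no isolated vertices. Then the depth of S/I_G equals 1; concretely: every list of elements of the maximal ideal 𝔪 = (x_1,…,x_m) of S that is a regular sequence on the S-module S/I_G has length at most 1, and there exists an element of 𝔪 that is a nonzerodivisor on S/I_G. -/

import Mathlib

open MvPolynomial

/-!
The quotient `S/I_G` is the Stanley–Reisner ring of the independence complex of `G`: a polynomial
lies in `I_G` iff it vanishes on restriction to the variables of each nonempty independent set `A`,
that is, in each `R[x_i : i ∈ A]`. The sum of all variables restricts to a nonzerodivisor in each of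
these rings, as its nonzero coefficients are all `1`, so it is a nonzerodivisor on `S/I_G`.

For the upper bound, a vertex of maximal weight is adjacent to all others, because no vertex is
isolated. For such a vertex `z`, the class `u` of `x_z` in `S/I_G` is killed by every other
variable, so that `𝔪 u = S (x_z u)`. A regular sequence `r, s` in `𝔪` would allow `u` to be divided
by `x_z`: there would be `t` with `x_z t = u` and with `x_j t = 0` for `j ≠ z`. A lift of `t` to `S`
would have constant coefficient both `1` and `0`, because `I_G ⊆ 𝔪²`.
-/

section RegularSequence

open Submodule RingTheory.Sequence
open scoped Pointwise

variable {A M : Type*} [CommRing A] [AddCommGroup M] [Module A M]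

theorem exists_smul_eq_of_isSMulRegular_quotSMulTop {r s z : A} {u : M}
    (hru : r • u ∈ A ∙ (z • u)) (hsu : s • u ∈ A ∙ (z • u))
    (hr : IsSMulRegular M r) (hs : IsSMulRegular (QuotSMulTop r M) s) :
    ∃ t : M, z • t = u ∧ ∀ a : A, a • u = 0 → a • t = 0 := by
  obtain ⟨b, hb⟩ := mem_span_singleton.1 hru
  obtain ⟨c, hc⟩ := mem_span_singleton.1 hsu
  have hsb : s • b • u = r • c • u := by
    rw [smul_comm s, smul_comm r, ← hb, ← hc, smul_comm b]
  have hbu : b • u ∈ r • (⊤ : Submodule A M) :=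
    mem_of_isSMulRegular_quotient_of_smul_mem hs (hsb ▸ smul_mem_pointwise_smul (c • u) r ⊤ mem_top)
  obtain ⟨t, -, ht⟩ := (mem_smul_pointwise_iff_exists _ _ _).1 hbu
  refine ⟨t, hr ?_, fun a ha ↦ hr.right_eq_zero_of_smul ?_⟩
  · calc r • z • t = z • b • u := by rw [smul_comm, ht]
      _ = r • u := by rw [smul_comm, hb]
  · rw [smul_comm, ht, smul_comm, ha, smul_zero]

theorem length_le_one_of_isWeaklyRegular {z : A} {u : M} {rs : List A}
    (hrs : ∀ r ∈ rs, r • u ∈ A ∙ (z • u))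
    (hu : ∀ t : M, z • t = u → ∃ a : A, a • u = 0 ∧ a • t ≠ 0)
    (hreg : IsWeaklyRegular M rs) : rs.length ≤ 1 := by
  match rs with
  | [] | [_] => simp
  | r :: s :: _ =>
    simp only [isWeaklyRegular_cons_iff] at hreg
    obtain ⟨t, hzt, ht⟩ := exists_smul_eq_of_isSMulRegular_quotSMulTop
      (hrs r (by simp)) (hrs s (by simp)) hreg.1 hreg.2.1
    obtain ⟨a, hau, hat⟩ := hu t hzt
    exact absurd (ht a hau) hat

end RegularSequence

section MvPolynomial

variable {σ τ R : Type*}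

theorem mem_pow_idealOfVars_of_X_mul_mem [CommSemiring R] {k : σ} {n : ℕ} {p : MvPolynomial σ R}
    (h : X k * p ∈ idealOfVars σ R ^ (n + 1)) : p ∈ idealOfVars σ R ^ n := by
  rw [mem_pow_idealOfVars_iff'] at h ⊢
  intro e he
  rw [← coeff_X_mul e k p]
  exact h _ (by simpa [add_comm 1] using he)

theorem killCompl_eq_zero_iff [CommSemiring R] {f : σ → τ} (hf : f.Injective)
    {p : MvPolynomial τ R} :
    killCompl hf p = 0 ↔ ∀ e ∈ p.support, ¬ (e.support : Set τ) ⊆ Set.range f := by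
  refine ⟨fun hp e he hef ↦ mem_support_iff.1 he ?_, fun hp ↦ ?_⟩
  · rw [← e.mapDomain_comapDomain f hf hef, ← coeff_killCompl hf, hp, coeff_zero]
  · ext d
    rw [coeff_killCompl, coeff_zero, ← notMem_support_iff]
    classical
    refine fun hd ↦ hp _ hd fun i hi ↦ ?_
    obtain ⟨k, -, rfl⟩ := Finset.mem_image.1 (Finsupp.mapDomain_support hi)
    exact ⟨k, rfl⟩

theorem killCompl_sum_X [CommSemiring R] [Fintype σ] [Fintype τ] {f : σ → τ} (hf : f.Injective) :
    killCompl hf (∑ j, X j : MvPolynomial τ R) = ∑ i, X i := by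
  rw [map_sum]
  refine (Finset.sum_of_injOn f hf.injOn (by simp) (fun j _ hj ↦ ?_) fun i _ ↦ ?_).symm
  · simp_all [killCompl]
  · rw [← rename_X f, killCompl_rename_app]

open scoped nonZeroDivisors

theorem mem_nonZeroDivisors_of_forall_coeff_mem [CommRing R] {p : MvPolynomial σ R} (hp : p ≠ 0)
    (h : ∀ e ∈ p.support, coeff e p ∈ R⁰) : p ∈ (MvPolynomial σ R)⁰ := by
  obtain ⟨_, _⟩ := exists_wellFoundedGT σ
  exact MonomialOrder.lex.mem_nonZeroDivisors_of_leadingCoeff_mem_nonZeroDivisors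
    (h _ (MonomialOrder.lex.degree_mem_support hp))

theorem sum_X_mem_nonZeroDivisors [CommRing R] [Fintype σ] [Nonempty σ] :
    ∑ i, X i ∈ (MvPolynomial σ R)⁰ := by
  classical
  nontriviality R
  have coeff_single (i : σ) : coeff (Finsupp.single i 1) (∑ j, X j : MvPolynomial σ R) = 1 := by
    simp [coeff_sum, coeff_X, Finsupp.single_left_inj]
  refine mem_nonZeroDivisors_of_forall_coeff_mem (fun h ↦ ?_) fun e he ↦ ?_
  · simpa [h] using coeff_single (Classical.arbitrary σ)
  · obtain ⟨i, -, hi⟩ := Finset.mem_biUnion.1 (support_sum he)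
    rw [support_X, Finset.mem_singleton] at hi
    simp [hi, coeff_single]

end MvPolynomial

section EdgeIdeal

variable {σ : Type*} (R : Type*) (G : SimpleGraph σ)

/-- The edge ideal `I_G` of `R[x_i : i ∈ σ]`, generated by `x_i x_j` for the edges `ij` of `G`. -/
noncomputable def edgeIdeal [CommSemiring R] : Ideal (MvPolynomial σ R) :=
  Ideal.span {p | ∃ i j : σ, G.Adj i j ∧ p = X i * X j}

variable {R G}

theorem X_mul_X_mem_edgeIdeal [CommSemiring R] {i j : σ} (h : G.Adj i j) :
    X i * X j ∈ edgeIdeal R G :=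
  Ideal.subset_span ⟨i, j, h, rfl⟩

theorem edgeIdeal_le_idealOfVars_sq [CommSemiring R] : edgeIdeal R G ≤ idealOfVars σ R ^ 2 := by
  rw [edgeIdeal, Ideal.span_le]
  rintro _ ⟨i, j, -, rfl⟩
  rw [sq]
  exact Ideal.mul_mem_mul (Ideal.subset_span ⟨i, rfl⟩) (Ideal.subset_span ⟨j, rfl⟩)

theorem mem_idealOfVars_of_X_mul_mem_edgeIdeal [CommSemiring R] {k : σ} {p : MvPolynomial σ R}
    (h : X k * p ∈ edgeIdeal R G) : p ∈ idealOfVars σ R :=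
  pow_one (idealOfVars σ R) ▸ mem_pow_idealOfVars_of_X_mul_mem (edgeIdeal_le_idealOfVars_sq h)

theorem edgeIdeal_eq_span_monomial [CommSemiring R] :
    edgeIdeal R G = Ideal.span ((fun e ↦ monomial e (1 : R)) ''
      {e | ∃ i j, G.Adj i j ∧ Finsupp.single i 1 + Finsupp.single j 1 = e}) := by
  rw [edgeIdeal]
  congr 1
  ext p
  constructor
  · rintro ⟨i, j, hij, rfl⟩
    exact ⟨_, ⟨i, j, hij, rfl⟩, by simp [X, monomial_mul]⟩
  · rintro ⟨_, ⟨i, j, hij, rfl⟩, rfl⟩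
    exact ⟨i, j, hij, by simp [X, monomial_mul]⟩

theorem single_add_single_le_iff {i j : σ} (hij : i ≠ j) {e : σ →₀ ℕ} :
    Finsupp.single i 1 + Finsupp.single j 1 ≤ e ↔ i ∈ e.support ∧ j ∈ e.support := by
  classical
  simp only [Finsupp.le_def, Finsupp.add_apply, Finsupp.single_apply, Finsupp.mem_support_iff]
  grind

theorem mem_edgeIdeal_iff_forall_not_isIndepSet [CommSemiring R] {p : MvPolynomial σ R} :
    p ∈ edgeIdeal R G ↔ ∀ e ∈ p.support, ¬ G.IsIndepSet (e.support : Set σ) := by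
  rw [edgeIdeal_eq_span_monomial, mem_ideal_span_monomial_image]
  refine forall₂_congr fun e _ ↦ ⟨?_, fun he ↦ ?_⟩
  · rintro ⟨_, ⟨i, j, hij, rfl⟩, hle⟩ he
    obtain ⟨hi, hj⟩ := (single_add_single_le_iff hij.ne).1 hle
    exact he hi hj hij.ne hij
  · obtain ⟨i, hi, j, hj, hne, hij⟩ : ∃ i ∈ e.support, ∃ j ∈ e.support, i ≠ j ∧ G.Adj i j := by
      simpa [SimpleGraph.isIndepSet_iff, Set.Pairwise] using he
    exact ⟨_, ⟨i, j, hij, rfl⟩, (single_add_single_le_iff hne).2 ⟨hi, hj⟩⟩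

theorem mem_edgeIdeal_iff_forall_killCompl_eq_zero [CommSemiring R] [Nonempty σ]
    {p : MvPolynomial σ R} :
    p ∈ edgeIdeal R G ↔ ∀ A : Set σ, A.Nonempty → G.IsIndepSet A →
      killCompl (Subtype.val_injective (p := (· ∈ A))) p = 0 := by
  simp only [mem_edgeIdeal_iff_forall_not_isIndepSet, killCompl_eq_zero_iff, Subtype.range_coe]
  refine ⟨fun hp A _ hA e he heA ↦ hp e he (hA.mono heA), fun hp e he hind ↦ ?_⟩
  obtain h0 | hne := (e.support : Set σ).eq_empty_or_nonempty
  · let i := Classical.arbitrary σ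
    exact hp {i} (Set.singleton_nonempty i) (Set.pairwise_singleton _ _) e he (by simp [h0])
  · exact hp _ hne hind e he subset_rfl

theorem isSMulRegular_quotient_edgeIdeal_sum_X [CommRing R] [Fintype σ] [Nonempty σ] :
    IsSMulRegular (MvPolynomial σ R ⧸ edgeIdeal R G) (∑ i, X i : MvPolynomial σ R) := by
  rw [isSMulRegular_quotient_iff_mem_of_smul_mem]
  intro p hp
  rw [smul_eq_mul] at hp
  rw [mem_edgeIdeal_iff_forall_killCompl_eq_zero] at hp ⊢
  intro A hAne hA
  classical
  have := hAne.to_subtype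
  have h := hp A hAne hA
  rw [map_mul, killCompl_sum_X] at h
  exact (mul_left_mem_nonZeroDivisors_eq_zero_iff sum_X_mem_nonZeroDivisors).1 h

theorem X_smul_mk_X_eq_zero [CommRing R] {i j : σ} (h : G.Adj i j) :
    (X j : MvPolynomial σ R) • Ideal.Quotient.mk (edgeIdeal R G) (X i) = 0 :=
  Ideal.Quotient.eq_zero_iff_mem.2 (X_mul_X_mem_edgeIdeal h.symm)

variable {z : σ}

theorem smul_mk_X_mem_span_of_isUniversal [CommRing R] (hz : G.IsUniversal z)
    {r : MvPolynomial σ R} (hr : r ∈ idealOfVars σ R) :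
    r • Ideal.Quotient.mk (edgeIdeal R G) (X z) ∈ Submodule.span (MvPolynomial σ R)
      {(X z : MvPolynomial σ R) • Ideal.Quotient.mk (edgeIdeal R G) (X z)} := by
  set u := Ideal.Quotient.mk (edgeIdeal R G) (X z)
  suffices idealOfVars σ R ≤ (Submodule.span _ {(X z : MvPolynomial σ R) • u}).comap
      (LinearMap.toSpanSingleton (MvPolynomial σ R) _ u) from this hr
  rw [Ideal.span_le]
  rintro _ ⟨j, rfl⟩
  obtain rfl | hj := eq_or_ne z j
  · exact Submodule.mem_span_singleton_self _
  · simp [u, X_smul_mk_X_eq_zero (hz hj)]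

theorem length_le_one_of_isWeaklyRegular_quotient_edgeIdeal [CommRing R] [Nontrivial R]
    [Nontrivial σ] (hz : G.IsUniversal z) {rs : List (MvPolynomial σ R)}
    (hrs : ∀ r ∈ rs, r ∈ idealOfVars σ R)
    (hreg : RingTheory.Sequence.IsWeaklyRegular (MvPolynomial σ R ⧸ edgeIdeal R G) rs) :
    rs.length ≤ 1 := by
  refine length_le_one_of_isWeaklyRegular
    (fun r hr ↦ smul_mk_X_mem_span_of_isUniversal hz (hrs r hr)) (fun t ht ↦ ?_) hreg
  obtain ⟨p, rfl⟩ := Ideal.Quotient.mk_surjective t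
  obtain ⟨k, hk⟩ := exists_ne z
  refine ⟨X k, X_smul_mk_X_eq_zero (hz hk.symm), fun hkp ↦ ?_⟩
  have hp : p ∈ idealOfVars σ R :=
    mem_idealOfVars_of_X_mul_mem_edgeIdeal (Ideal.Quotient.eq_zero_iff_mem.1 hkp)
  have hp1 : p - 1 ∈ idealOfVars σ R := by
    refine mem_idealOfVars_of_X_mul_mem_edgeIdeal (k := z) (G := G) ?_
    rw [mul_sub, mul_one]
    exact Ideal.Quotient.eq.1 ht
  have h1 : C 1 ∈ idealOfVars σ R ^ 1 := by simpa using sub_mem hp hp1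
  simpa using (C_mem_pow_idealOfVars_iff 1 (1 : R)).1 h1

end EdgeIdeal

theorem isUniversal_of_forall_weight_le {V α : Type*} [Add α] [Zero α] [Preorder α]
    [AddRightMono α] {G : SimpleGraph V} {w : V → α}
    (hthr : ∀ i j, i ≠ j → (G.Adj i j ↔ 0 < w i + w j))
    (hiso : ∀ i, ∃ j, G.Adj i j) {z : V} (hz : ∀ i, w i ≤ w z) : G.IsUniversal z := by
  intro j hj
  obtain ⟨k, hk⟩ := hiso j
  exact (hthr z j hj).2 (((hthr k j hk.ne').1 hk.symm).trans_le (add_le_add_left (hz k) _))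

theorem threshold_edge_ideal_depth_one_general (R : Type*) [CommRing R] [Nontrivial R]
    {σ : Type*} [Finite σ] [Nontrivial σ] (G : SimpleGraph σ) {z : σ} (hz : G.IsUniversal z) :
    (∀ rs : List (MvPolynomial σ R), (∀ r ∈ rs, r ∈ idealOfVars σ R) →
      RingTheory.Sequence.IsRegular (MvPolynomial σ R ⧸ edgeIdeal R G) rs → rs.length ≤ 1) ∧
    ∃ r ∈ idealOfVars σ R, IsSMulRegular (MvPolynomial σ R ⧸ edgeIdeal R G) r := by
  have := Fintype.ofFinite σ
  exact ⟨fun _ hrs hreg ↦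
      length_le_one_of_isWeaklyRegular_quotient_edgeIdeal hz hrs hreg.toIsWeaklyRegular,
    ∑ i, X i, Ideal.sum_mem _ fun i _ ↦ Ideal.subset_span ⟨i, rfl⟩,
    isSMulRegular_quotient_edgeIdeal_sum_X⟩

/-- Let `G` be a threshold graph on `{1,…,m}` with weight
vector `w` satisfying `w_1 ≥ ⋯ ≥ w_m`, without isolated vertices. Then the
depth of `S/I_G` equals `1`: every list of elements of the maximal ideal
`𝔪 = (x_1,…,x_m)` of `S = K[x_1,…,x_m]` that is a regular sequence on the
`S`-module `S/I_G` has length at most `1`, and there is an element of `𝔪`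
that is a nonzerodivisor on `S/I_G`.
Vertices are `Fin m` (vertex `v` has 1-based label `v.val + 1`); `i : Fin n`
has 1-based label `i.val + 1`. -/
theorem threshold_edge_ideal_depth_one
    (K : Type*) [Field K]
    (m : ℕ) (hm : 2 ≤ m) (G : SimpleGraph (Fin m)) (w : Fin m → ℝ)
    (hthr : ∀ i j : Fin m, i ≠ j → (G.Adj i j ↔ 0 < w i + w j))
    (hw : Antitone w)
    (hiso : ∀ i, ∃ j, G.Adj i j)
    (n : ℕ) (hn : 1 ≤ n) (hnm : n ≤ m)
    (hn_mem : ∃ j : Fin m, n - 1 < j.val ∧ G.Adj ⟨n - 1, by omega⟩ j)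
    (hn_max : ∀ i j : Fin m, n ≤ i.val → i.val < j.val → ¬ G.Adj i j)
    (lam : Fin n → ℕ)
    (hlam_mem : ∀ i : Fin n, ∃ j : Fin m, j.val + 1 = lam i ∧ G.Adj (Fin.castLE hnm i) j)
    (hlam_max : ∀ (i : Fin n) (j : Fin m), G.Adj (Fin.castLE hnm i) j → j.val < lam i) :
    (∀ rs : List (MvPolynomial (Fin m) K),
        (∀ r ∈ rs, r ∈ Ideal.span (Set.range (X : Fin m → MvPolynomial (Fin m) K))) →
        RingTheory.Sequence.IsRegular
          (MvPolynomial (Fin m) K ⧸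
            Ideal.span {p : MvPolynomial (Fin m) K |
              ∃ i j : Fin m, G.Adj i j ∧ p = X i * X j}) rs →
        rs.length ≤ 1) ∧
    (∃ r : MvPolynomial (Fin m) K,
        r ∈ Ideal.span (Set.range (X : Fin m → MvPolynomial (Fin m) K)) ∧
        IsSMulRegular
          (MvPolynomial (Fin m) K ⧸
            Ideal.span {p : MvPolynomial (Fin m) K |
              ∃ i j : Fin m, G.Adj i j ∧ p = X i * X j}) r) := by
  have : Nontrivial (Fin m) := Fin.nontrivial_iff_two_le.2 hm
  have hz : G.IsUniversal ⟨0, by omega⟩ :=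
    isUniversal_of_forall_weight_le hthr hiso fun i ↦ hw (Fin.mk_le_of_le_val i.val.zero_le)
  exact threshold_edge_ideal_depth_one_general K G hz
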